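/- (Theorem 3.1, conditional form.) Assume S is regular and the pointwise Γ-consistency hypothesis holds with Γ(t) = β·t^α for some α ∈ (0,1] and β > 0. Then for every L ∈ A and every s ∈ S, D(L,s) − D* ≤ Γ̄(C(L,s) − C*), where Γ̄(t) = max{ t, (n_e·(l̄ + Σ_{j=1}^{n_e} C_j))^{1−α}·β·t^α }. -/

import Mathlib

open Finset

/-- Conditional deferral error `D(L,s)`. -/
noncomputable def Dcond (nE : ℕ) (cbar : Fin nE → ℝ)
    (sel : (Fin (nE + 1) → ℝ) → Fin (nE + 1)) (L : ℝ) (s : Fin (nE + 1) → ℝ) : ℝ :=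
  (if sel s = 0 then L else 0) + ∑ j : Fin nE, if sel s = j.succ then cbar j else 0

/-- Best-in-class conditional deferral error `D* = min{c̄₀, c̄₁, ..., c̄_{n_e}}`, with
`c̄₀ = sInf A`. -/
noncomputable def Dstar (nE : ℕ) (cbar : Fin nE → ℝ) (A : Set ℝ) : ℝ :=
  min (sInf A) (⨅ j, cbar j)

/-- Conditional surrogate error `C(L,s)`. -/
noncomputable def Ccond (nE : ℕ) (cbar : Fin nE → ℝ)
    (ℓ : (Fin (nE + 1) → ℝ) → Fin (nE + 1) → ℝ) (L : ℝ) (s : Fin (nE + 1) → ℝ) : ℝ :=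
  (∑ j, cbar j) * ℓ s 0
    + ∑ j : Fin nE, (L + ∑ j' ∈ univ.erase j, cbar j') * ℓ s j.succ
    - ((nE : ℝ) - 1) * L

/-- Best-in-class conditional surrogate error `C*`. -/
noncomputable def Cstar (nE : ℕ) (cbar : Fin nE → ℝ)
    (ℓ : (Fin (nE + 1) → ℝ) → Fin (nE + 1) → ℝ) (A : Set ℝ)
    (S : Set (Fin (nE + 1) → ℝ)) : ℝ :=
  sInf {u | ∃ L' ∈ A, ∃ s' ∈ S, u = Ccond nE cbar ℓ L' s'}

/-!
For fixed `L`, deferral is cost-sensitive classification with cost vector `c = (L, c̄₁, …, c̄ₙ)`,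
writing `n` for `n_e`. The weights `w j = ∑ i, c i - c j` are nonnegative with total mass
`W = n * ∑ i, c i`, and the `w`-weighted zero-one loss differs from the cost of the selected label
by a constant. Normalizing `w` to a probability vector turns `Γ`-consistency into a bound on cost
differences, and homogeneity produces the factor `W ^ (1 - α)`.

It remains to account for the infimum over `L ∈ A`. The surrogate error is affine in `L`, with
slope `∑ j ≥ 1, ℓ(s, j) - (n - 1) ≥ 0` because at most one expert is selected, so it may be compared
at `L` and at `inf A`. The slope is at least `1` when label `0` is selected, which gives the linear
term of the maximum.
-/

open scoped Matrix

section Regret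

variable {X : Type*} {f : X → ℝ}

/-- The excess of `f x` over the infimum of `f`. The infimum is real-valued, so it is meaningful
only for `f` bounded below. -/
noncomputable def regret (f : X → ℝ) (x : X) : ℝ :=
  f x - ⨅ y, f y

lemma sub_le_regret (hf : BddBelow (Set.range f)) (x y : X) : f x - f y ≤ regret f x :=
  sub_le_sub_left (ciInf_le hf y) _

lemma regret_nonneg (hf : BddBelow (Set.range f)) (x : X) : 0 ≤ regret f x := by
  simpa using sub_le_regret hf x x

lemma regret_le_sub {b : ℝ} (hb : ∀ y, b ≤ f y) (x : X) : regret f x ≤ f x - b :=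
  have : Nonempty X := ⟨x⟩
  sub_le_sub_left (le_ciInf hb) _

lemma regret_const_mul {a : ℝ} (ha : 0 ≤ a) (x : X) :
    regret (fun y => a * f y) x = a * regret f x := by
  rw [regret, regret, ← Real.mul_iInf_of_nonneg ha, mul_sub]

lemma regret_sub_const (hf : BddBelow (Set.range f)) (b : ℝ) (x : X) :
    regret (fun y => f y - b) x = regret f x := by
  have : Nonempty X := ⟨x⟩
  rw [regret, regret, ← ciInf_sub hf, sub_sub_sub_cancel_right]

end Regret

section ZeroOneLoss

variable {X ι : Type*} [DecidableEq ι]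

/-- The zero-one loss of the decision rule `sel`. -/
def zeroOneLoss (sel : X → ι) (x : X) (j : ι) : ℝ :=
  if sel x ≠ j then 1 else 0

lemma zeroOneLoss_nonneg (sel : X → ι) : 0 ≤ zeroOneLoss sel :=
  fun x j => by unfold zeroOneLoss; positivity

lemma zeroOneLoss_le_one (sel : X → ι) : zeroOneLoss sel ≤ 1 :=
  fun x j => by unfold zeroOneLoss; split_ifs <;> simp

lemma zeroOneLoss_le {sel : X → ι} {ℓ : X → ι → ℝ} (hℓ0 : 0 ≤ ℓ)
    (hℓ1 : ∀ x j, j ≠ sel x → 1 ≤ ℓ x j) : zeroOneLoss sel ≤ ℓ := by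
  intro x j
  unfold zeroOneLoss
  split_ifs with h
  exacts [hℓ1 x j h.symm, hℓ0 x j]

lemma dotProduct_zeroOneLoss [Fintype ι] (w : ι → ℝ) (sel : X → ι) (x : X) :
    w ⬝ᵥ zeroOneLoss sel x = ∑ j, w j - w (sel x) := by
  have hloss : zeroOneLoss sel x = 1 - Pi.single (sel x) 1 := by
    ext j
    by_cases h : sel x = j <;> simp [zeroOneLoss, h]
  rw [hloss, dotProduct_sub, dotProduct_one, dotProduct_single_one]

end ZeroOneLoss

section CostSensitive

variable {X ι : Type*} [Fintype ι]

lemma bddBelow_range_dotProduct {w : ι → ℝ} (hw : 0 ≤ w) {ℓ : X → ι → ℝ} (hℓ : 0 ≤ ℓ) :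
    BddBelow (Set.range fun x => w ⬝ᵥ ℓ x) :=
  ⟨0, Set.forall_mem_range.2 fun x => dotProduct_nonneg_of_nonneg hw (hℓ x)⟩

/-- The cost-complementary weight of the label `j`: the total cost of all other labels. -/
def complementaryWeight (c : ι → ℝ) (j : ι) : ℝ :=
  ∑ i, c i - c j

lemma complementaryWeight_nonneg {c : ι → ℝ} (hc : 0 ≤ c) : 0 ≤ complementaryWeight c :=
  fun j => sub_nonneg.2 (single_le_sum (fun i _ => hc i) (mem_univ j))

lemma sum_complementaryWeight (c : ι → ℝ) :
    ∑ j, complementaryWeight c j = ((Fintype.card ι : ℝ) - 1) * ∑ j, c j := by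
  simp only [complementaryWeight, sum_sub_distrib, sum_const, card_univ, nsmul_eq_mul]
  ring

variable [DecidableEq ι] {sel : X → ι} {ℓ : X → ι → ℝ} {α β : ℝ}

/-- Pointwise `Γ`-consistency: for every distribution `p` of the label, the conditional zero-one
regret is at most `Γ` of the conditional `ℓ`-regret. Here `X` is the space of achievable
predictions, over which both infima are taken. -/
def PointwiseConsistent (Γ : ℝ → ℝ) (sel : X → ι) (ℓ : X → ι → ℝ) : Prop :=
  ∀ p ∈ stdSimplex ℝ ι, ∀ x,
    regret (fun y => p ⬝ᵥ zeroOneLoss sel y) x ≤ Γ (regret (fun y => p ⬝ᵥ ℓ y) x)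

lemma PointwiseConsistent.regret_le_of_nonneg
    (h : PointwiseConsistent (fun t => β * t ^ α) sel ℓ) (hβ : 0 ≤ β) (hℓ : 0 ≤ ℓ)
    {w : ι → ℝ} (hw : 0 ≤ w) (x : X) :
    regret (fun y => w ⬝ᵥ zeroOneLoss sel y) x ≤
      (∑ j, w j) ^ (1 - α) * β * regret (fun y => w ⬝ᵥ ℓ y) x ^ α := by
  have hr := regret_nonneg (bddBelow_range_dotProduct hw hℓ) x
  rcases (Fintype.sum_nonneg hw).eq_or_lt with hW | hW
  · obtain rfl : w = 0 := (Fintype.sum_eq_zero_iff_of_nonneg hw).1 hW.symm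
    have hzero : regret (fun y => (0 : ι → ℝ) ⬝ᵥ zeroOneLoss sel y) x = 0 := by
      have : Nonempty X := ⟨x⟩
      simp [regret]
    rw [hzero]
    positivity
  · set W := ∑ j, w j
    have hp : W⁻¹ • w ∈ stdSimplex ℝ ι :=
      ⟨fun j => mul_nonneg (inv_nonneg.2 hW.le) (hw j), by
        simp only [Pi.smul_apply, smul_eq_mul, ← mul_sum]
        exact inv_mul_cancel₀ hW.ne'⟩
    have hnormalized := h _ hp x
    simp only [smul_dotProduct, smul_eq_mul, regret_const_mul (inv_nonneg.2 hW.le)]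
      at hnormalized
    rw [inv_mul_le_iff₀ hW] at hnormalized
    refine hnormalized.trans_eq ?_
    rw [Real.mul_rpow (inv_nonneg.2 hW.le) hr, Real.inv_rpow hW.le, Real.rpow_sub hW, Real.rpow_one]
    ring

lemma PointwiseConsistent.cost_sub_cost_le
    (h : PointwiseConsistent (fun t => β * t ^ α) sel ℓ) (hβ : 0 ≤ β) (hℓ : 0 ≤ ℓ)
    {c : ι → ℝ} (hc : 0 ≤ c) (x y : X) :
    c (sel x) - c (sel y) ≤ (((Fintype.card ι : ℝ) - 1) * ∑ j, c j) ^ (1 - α) * β *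
      regret (fun z => complementaryWeight c ⬝ᵥ ℓ z) x ^ α := by
  have hw := complementaryWeight_nonneg hc
  calc c (sel x) - c (sel y)
      = complementaryWeight c ⬝ᵥ zeroOneLoss sel x -
          complementaryWeight c ⬝ᵥ zeroOneLoss sel y := by
        simp only [dotProduct_zeroOneLoss, complementaryWeight]
        ring
    _ ≤ regret (fun z => complementaryWeight c ⬝ᵥ zeroOneLoss sel z) x :=
        sub_le_regret (bddBelow_range_dotProduct hw (zeroOneLoss_nonneg sel)) x y
    _ ≤ _ := by
        simpa only [sum_complementaryWeight] using h.regret_le_of_nonneg hβ hℓ hw x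

end CostSensitive

section Deferral

variable {X : Type*} {n : ℕ} {sel : X → Fin (n + 1)} {ℓ : X → Fin (n + 1) → ℝ}
  {cbar : Fin n → ℝ} {A : Set ℝ} {L M : ℝ}

/-- The cost of each label: `L` for predicting oneself (label `0`), and `cbar j` for deferring to
the expert `j` (label `j.succ`). -/
def deferralCost (cbar : Fin n → ℝ) (L : ℝ) : Fin (n + 1) → ℝ :=
  Fin.cons L cbar

@[simp]
lemma deferralCost_zero (cbar : Fin n → ℝ) (L : ℝ) : deferralCost cbar L 0 = L := rfl

@[simp]
lemma deferralCost_succ (cbar : Fin n → ℝ) (L : ℝ) (j : Fin n) :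
    deferralCost cbar L j.succ = cbar j := rfl

lemma deferralCost_nonneg (hcbar : 0 ≤ cbar) (hL : 0 ≤ L) : 0 ≤ deferralCost cbar L :=
  Fin.cases hL hcbar

lemma sum_deferralCost (cbar : Fin n → ℝ) (L : ℝ) :
    ∑ j, deferralCost cbar L j = L + ∑ j, cbar j :=
  Fin.sum_cons L cbar

/-- The conditional surrogate error `C(L, x)` of deferral, over an arbitrary prediction space. -/
noncomputable def surrogateError (cbar : Fin n → ℝ) (ℓ : X → Fin (n + 1) → ℝ) (L : ℝ) (x : X) : ℝ :=
  complementaryWeight (deferralCost cbar L) ⬝ᵥ ℓ x - ((n : ℝ) - 1) * L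

/-- The slope of the surrogate error as an affine function of `L`. -/
noncomputable def surrogateSlope (ℓ : X → Fin (n + 1) → ℝ) (x : X) : ℝ :=
  ∑ j : Fin n, ℓ x j.succ - ((n : ℝ) - 1)

/-- The best-in-class surrogate error `C*`, with `L` ranging over `A` and the prediction over all
of `X`. -/
noncomputable def bestSurrogateError (cbar : Fin n → ℝ) (ℓ : X → Fin (n + 1) → ℝ) (A : Set ℝ) : ℝ :=
  ⨅ q : A × X, surrogateError cbar ℓ q.1 q.2

lemma surrogateError_sub_surrogateError (cbar : Fin n → ℝ) (ℓ : X → Fin (n + 1) → ℝ) (L M : ℝ)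
    (x : X) :
    surrogateError cbar ℓ L x - surrogateError cbar ℓ M x = (L - M) * surrogateSlope ℓ x := by
  have hweights : complementaryWeight (deferralCost cbar L) -
      complementaryWeight (deferralCost cbar M) = Fin.cons 0 fun _ => L - M := by
    ext j
    refine Fin.cases ?_ (fun j => ?_) j <;>
      simp [complementaryWeight, sum_deferralCost]
  have hdot := sub_dotProduct (complementaryWeight (deferralCost cbar L))
    (complementaryWeight (deferralCost cbar M)) (ℓ x)
  rw [hweights, dotProduct, Fin.sum_univ_succ] at hdot
  simp only [Fin.cons_zero, Fin.cons_succ, zero_mul, zero_add, ← mul_sum] at hdot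
  simp only [surrogateError, surrogateSlope]
  linear_combination -hdot

lemma surrogateSlope_zeroOneLoss (sel : X → Fin (n + 1)) (x : X) :
    surrogateSlope (zeroOneLoss sel) x = 1 - zeroOneLoss sel x 0 := by
  have htotal : ∑ j, zeroOneLoss sel x j = n := by
    simpa [one_dotProduct] using dotProduct_zeroOneLoss 1 sel x
  rw [Fin.sum_univ_succ] at htotal
  unfold surrogateSlope
  linarith

lemma one_sub_zeroOneLoss_le_surrogateSlope (hℓ : zeroOneLoss sel ≤ ℓ) (x : X) :
    1 - zeroOneLoss sel x 0 ≤ surrogateSlope ℓ x := by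
  rw [← surrogateSlope_zeroOneLoss]
  exact sub_le_sub_right (sum_le_sum fun j _ => hℓ x j.succ) _

lemma surrogateSlope_nonneg (hℓ : zeroOneLoss sel ≤ ℓ) (x : X) : 0 ≤ surrogateSlope ℓ x :=
  (sub_nonneg.2 (zeroOneLoss_le_one sel x 0)).trans (one_sub_zeroOneLoss_le_surrogateSlope hℓ x)

lemma surrogateError_mono (hℓ : zeroOneLoss sel ≤ ℓ) (cbar : Fin n → ℝ) (x : X) :
    Monotone fun L => surrogateError cbar ℓ L x := by
  intro M L hML
  have hdiff := surrogateError_sub_surrogateError cbar ℓ L M x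
  exact sub_nonneg.1 (hdiff ▸ mul_nonneg (sub_nonneg.2 hML) (surrogateSlope_nonneg hℓ x))

lemma surrogateError_nonneg (hℓ : zeroOneLoss sel ≤ ℓ) (hcbar : 0 ≤ cbar) (hL : 0 ≤ L) (x : X) :
    0 ≤ surrogateError cbar ℓ L x := by
  have hℓ0 : 0 ≤ ℓ := (zeroOneLoss_nonneg sel).trans hℓ
  calc (0 : ℝ) ≤ complementaryWeight (deferralCost cbar 0) ⬝ᵥ ℓ x :=
        dotProduct_nonneg_of_nonneg
          (complementaryWeight_nonneg (deferralCost_nonneg hcbar le_rfl)) (hℓ0 x)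
    _ = surrogateError cbar ℓ 0 x := by rw [surrogateError, mul_zero, sub_zero]
    _ ≤ surrogateError cbar ℓ L x := surrogateError_mono hℓ cbar x hL

lemma continuous_surrogateError (cbar : Fin n → ℝ) (ℓ : X → Fin (n + 1) → ℝ) (x : X) :
    Continuous fun L => surrogateError cbar ℓ L x := by
  have haffine : (fun L => surrogateError cbar ℓ L x) =
      fun L => surrogateError cbar ℓ 0 x + L * surrogateSlope ℓ x := by
    ext L
    linear_combination surrogateError_sub_surrogateError cbar ℓ L 0 x
  rw [haffine]
  fun_prop

lemma bestSurrogateError_le_of_mem_closure (hℓ : zeroOneLoss sel ≤ ℓ) (hcbar : 0 ≤ cbar)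
    (hA : A ⊆ Set.Ici 0) (hL : L ∈ closure A) (x : X) :
    bestSurrogateError cbar ℓ A ≤ surrogateError cbar ℓ L x := by
  have hclosed : IsClosed {L | bestSurrogateError cbar ℓ A ≤ surrogateError cbar ℓ L x} :=
    isClosed_le continuous_const (continuous_surrogateError cbar ℓ x)
  refine closure_minimal (fun M hM => ?_) hclosed hL
  have hbdd : BddBelow (Set.range fun q : A × X => surrogateError cbar ℓ q.1 q.2) :=
    ⟨0, Set.forall_mem_range.2 fun q => surrogateError_nonneg hℓ hcbar (hA q.1.2) q.2⟩
  exact ciInf_le hbdd (⟨M, hM⟩, x)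

lemma regret_complementaryWeight_le (hℓ : zeroOneLoss sel ≤ ℓ) (hcbar : 0 ≤ cbar)
    (hA : A ⊆ Set.Ici 0) (hL : L ∈ closure A) (x : X) :
    regret (fun y => complementaryWeight (deferralCost cbar L) ⬝ᵥ ℓ y) x ≤
      surrogateError cbar ℓ L x - bestSurrogateError cbar ℓ A := by
  have hL0 : 0 ≤ L := closure_minimal hA isClosed_Ici hL
  have hbdd := bddBelow_range_dotProduct
    (complementaryWeight_nonneg (deferralCost_nonneg hcbar hL0))
    ((zeroOneLoss_nonneg sel).trans hℓ)
  rw [← regret_sub_const hbdd (((n : ℝ) - 1) * L)]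
  exact regret_le_sub (bestSurrogateError_le_of_mem_closure hℓ hcbar hA hL) x

lemma PointwiseConsistent.deferralCost_sub_le {α β B t : ℝ}
    (h : PointwiseConsistent (fun t => β * t ^ α) sel ℓ) (hα : α ∈ Set.Icc 0 1) (hβ : 0 ≤ β)
    (hℓ : zeroOneLoss sel ≤ ℓ) (hcbar : 0 ≤ cbar) (hA : A ⊆ Set.Ici 0) (hL : L ∈ closure A)
    (hB : L + ∑ j, cbar j ≤ B) (x y : X)
    (ht : surrogateError cbar ℓ L x - bestSurrogateError cbar ℓ A ≤ t) :
    deferralCost cbar L (sel x) - deferralCost cbar L (sel y) ≤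
      ((n : ℝ) * B) ^ (1 - α) * β * t ^ α := by
  have hℓ0 : 0 ≤ ℓ := (zeroOneLoss_nonneg sel).trans hℓ
  have hcost := deferralCost_nonneg hcbar (closure_minimal hA isClosed_Ici hL)
  have htotal : 0 ≤ L + ∑ j, cbar j := sum_deferralCost cbar L ▸ Fintype.sum_nonneg hcost
  have hregret := regret_nonneg
    (bddBelow_range_dotProduct (complementaryWeight_nonneg hcost) hℓ0) x
  calc deferralCost cbar L (sel x) - deferralCost cbar L (sel y)
      ≤ ((n : ℝ) * (L + ∑ j, cbar j)) ^ (1 - α) * β *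
          regret (fun z => complementaryWeight (deferralCost cbar L) ⬝ᵥ ℓ z) x ^ α := by
        simpa [sum_deferralCost] using h.cost_sub_cost_le hβ hℓ0 hcost x y
    _ ≤ _ := by
        have hα0 := hα.1
        have hα1 := sub_nonneg.2 hα.2
        have hexcess := (regret_complementaryWeight_le hℓ hcbar hA hL x).trans ht
        have hB0 : 0 ≤ (n : ℝ) * B := mul_nonneg n.cast_nonneg (htotal.trans hB)
        gcongr

lemma sub_le_surrogateError_sub (hℓ : zeroOneLoss sel ≤ ℓ) (cbar : Fin n → ℝ) (hML : M ≤ L) {x : X}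
    (hx : sel x = 0) : L - M ≤ surrogateError cbar ℓ L x - surrogateError cbar ℓ M x := by
  have hslope : 1 ≤ surrogateSlope ℓ x := by
    simpa [zeroOneLoss, hx] using one_sub_zeroOneLoss_le_surrogateSlope hℓ x
  rw [surrogateError_sub_surrogateError]
  exact le_mul_of_one_le_right (sub_nonneg.2 hML) hslope

theorem single_stage_consistency_bound_conditional_general (hn : 1 ≤ n)
    (hsel : Function.Surjective sel) (hℓ : zeroOneLoss sel ≤ ℓ)
    {lbar : ℝ} (hA : A ⊆ Set.Icc 0 lbar)
    {C : Fin n → ℝ} (hcbar : ∀ j, cbar j ∈ Set.Icc 0 (C j))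
    {α β : ℝ} (hα : α ∈ Set.Ioc 0 1) (hβ : 0 < β)
    (hcons : PointwiseConsistent (fun t => β * t ^ α) sel ℓ) (hL : L ∈ A) (x : X) :
    deferralCost cbar L (sel x) - min (sInf A) (⨅ j, cbar j) ≤
      max (surrogateError cbar ℓ L x - bestSurrogateError cbar ℓ A)
        (((n : ℝ) * (lbar + ∑ j, C j)) ^ (1 - α) * β *
          (surrogateError cbar ℓ L x - bestSurrogateError cbar ℓ A) ^ α) := by
  have : Nonempty (Fin n) := ⟨⟨0, hn⟩⟩
  have hA0 : A ⊆ Set.Ici 0 := hA.trans Set.Icc_subset_Ici_self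
  have hcbar0 : 0 ≤ cbar := fun j => (hcbar j).1
  have hInf : sInf A ∈ closure A := csInf_mem_closure ⟨L, hL⟩ ⟨0, hA0⟩
  have hInfL : sInf A ≤ L := csInf_le ⟨0, hA0⟩ hL
  have hcost {M : ℝ} (hM : M ∈ closure A) (hML : M ≤ L) (y : X) :=
    have hMlbar : M ≤ lbar := (closure_minimal hA isClosed_Icc hM).2
    hcons.deferralCost_sub_le (Set.Ioc_subset_Icc_self hα) hβ.le hℓ hcbar0 hA0 hM
      (add_le_add hMlbar (sum_le_sum fun j _ => (hcbar j).2)) x y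
      (sub_le_sub_right (surrogateError_mono hℓ cbar x hML) _)
  rcases min_choice (sInf A) (⨅ j, cbar j) with hmin | hmin <;> rw [hmin]
  · by_cases hx : sel x = 0
    · rw [hx, deferralCost_zero]
      have hbest := bestSurrogateError_le_of_mem_closure hℓ hcbar0 hA0 hInf x
      exact le_max_of_le_left <| (sub_le_surrogateError_sub hℓ cbar hInfL hx).trans
        (sub_le_sub_left hbest _)
    · obtain ⟨i, hi⟩ := Fin.exists_succ_eq.2 hx
      obtain ⟨y, hy⟩ := hsel 0
      refine le_max_of_le_right ?_
      simpa only [hy, ← hi, deferralCost_zero, deferralCost_succ] using hcost hInf hInfL y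
  · obtain ⟨j, hj⟩ := exists_eq_ciInf_of_finite (f := cbar)
    obtain ⟨y, hy⟩ := hsel j.succ
    rw [← hj, ← deferralCost_succ cbar L j, ← hy]
    exact le_max_of_le_right (hcost (subset_closure hL) le_rfl y)

end Deferral

section ScoreVectors

variable {n : ℕ}

lemma sInf_setOf_exists_mem_eq {X Y : Type*} [InfSet Y] (S : Set X) (f : X → Y) :
    sInf {v | ∃ x ∈ S, v = f x} = ⨅ x : S, f x := by
  rw [← sInf_image']
  simp only [Set.image, eq_comm]

lemma dcond_eq_deferralCost (cbar : Fin n → ℝ) (sel : (Fin (n + 1) → ℝ) → Fin (n + 1)) (L : ℝ)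
    (s : Fin (n + 1) → ℝ) : Dcond n cbar sel L s = deferralCost cbar L (sel s) := by
  unfold Dcond
  generalize sel s = i
  cases i using Fin.cases <;> simp [Fin.succ_ne_zero, eq_comm]

lemma ccond_eq_surrogateError (cbar : Fin n → ℝ) (ℓ : (Fin (n + 1) → ℝ) → Fin (n + 1) → ℝ)
    (S : Set (Fin (n + 1) → ℝ)) (L : ℝ) (s : S) :
    Ccond n cbar ℓ L s = surrogateError cbar (fun s : S => ℓ s) L s := by
  simp only [Ccond, surrogateError, dotProduct, Fin.sum_univ_succ, complementaryWeight,
    deferralCost_zero, deferralCost_succ, sum_erase_eq_sub (mem_univ _), add_sub_cancel_left]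
  simp only [add_sub_assoc]

lemma cstar_eq_bestSurrogateError (cbar : Fin n → ℝ) (ℓ : (Fin (n + 1) → ℝ) → Fin (n + 1) → ℝ)
    (A : Set ℝ) (S : Set (Fin (n + 1) → ℝ)) :
    Cstar n cbar ℓ A S = bestSurrogateError cbar (fun s : S => ℓ s) A := by
  simp only [bestSurrogateError, ← ccond_eq_surrogateError, iInf, Cstar]
  congr 1
  ext u
  simp [eq_comm]

end ScoreVectors

/-- Theorem 3.1, conditional form. -/
theorem single_stage_consistency_bound_conditional (nE : ℕ) (hnE : 1 ≤ nE)
    (sel : (Fin (nE + 1) → ℝ) → Fin (nE + 1))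
    (hsel : ∀ (s : Fin (nE + 1) → ℝ) (j : Fin (nE + 1)), s j ≤ s (sel s))
    (S : Set (Fin (nE + 1) → ℝ)) (hS : S.Nonempty)
    (hreg : ∀ j : Fin (nE + 1), ∃ s ∈ S, sel s = j)
    (ℓ : (Fin (nE + 1) → ℝ) → Fin (nE + 1) → ℝ)
    (hℓ0 : ∀ s j, 0 ≤ ℓ s j)
    (hℓ1 : ∀ s j, j ≠ sel s → 1 ≤ ℓ s j)
    (lbar : ℝ) (hlbar : 0 < lbar)
    (C : Fin nE → ℝ) (hC : ∀ j, 0 < C j)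
    (A : Set ℝ) (hA : A.Nonempty) (hAsub : A ⊆ Set.Icc 0 lbar)
    (cbar : Fin nE → ℝ) (hcbar : ∀ j, cbar j ∈ Set.Icc 0 (C j))
    (α β : ℝ) (hα : α ∈ Set.Ioc (0 : ℝ) 1) (hβ : 0 < β)
    (hcons : ∀ p : Fin (nE + 1) → ℝ, (∀ j, 0 ≤ p j) → (∑ j, p j) = 1 → ∀ s ∈ S,
      (∑ j, p j * (if sel s ≠ j then (1 : ℝ) else 0))
          - sInf {v | ∃ s' ∈ S, v = ∑ j, p j * (if sel s' ≠ j then (1 : ℝ) else 0)}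
        ≤ β * ((∑ j, p j * ℓ s j)
          - sInf {v | ∃ s' ∈ S, v = ∑ j, p j * ℓ s' j}) ^ α)
    (L : ℝ) (hL : L ∈ A) (s : Fin (nE + 1) → ℝ) (hs : s ∈ S) :
    Dcond nE cbar sel L s - Dstar nE cbar A ≤
      max (Ccond nE cbar ℓ L s - Cstar nE cbar ℓ A S)
        (((nE : ℝ) * (lbar + ∑ j, C j)) ^ (1 - α) * β
          * (Ccond nE cbar ℓ L s - Cstar nE cbar ℓ A S) ^ α) := by
  have hconsistent :
      PointwiseConsistent (fun t => β * t ^ α) (fun s : S => sel s) fun s => ℓ s := by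
    intro p hp s
    simpa only [regret, dotProduct, zeroOneLoss, sInf_setOf_exists_mem_eq] using
      hcons p hp.1 hp.2 s s.2
  have hsurj : Function.Surjective fun s : S => sel s := fun j =>
    (hreg j).elim fun s hs => ⟨⟨s, hs.1⟩, hs.2⟩
  have hℓ := zeroOneLoss_le (fun s : S => hℓ0 s) fun s => hℓ1 s
  rw [dcond_eq_deferralCost, ccond_eq_surrogateError cbar ℓ S L ⟨s, hs⟩,
    cstar_eq_bestSurrogateError]
  exact single_stage_consistency_bound_conditional_general hnE hsurj hℓ hAsub hcbar hα hβ
    hconsistent hL ⟨s, hs⟩
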